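/- arXiv:2510.04902 — 3 statements merged into one kernel-verified Lean document; each statement's English description precedes it below -/
import Mathlib

section
/- Let n be a positive natural number and let v₁, …, vₙ and v₁', …, vₙ' : Fin p → ℝ be vectors such that every coordinate of every vᵢ and vᵢ' lies in {0, 1}, the coordinate sum of each vᵢ and each vᵢ' equals k, and there is an index u ∈ Fin n with vᵢ = vᵢ' for all i ≠ u. Then sqrt(∑_{j} ((∑_{i} vᵢ j) - (∑_{i} vᵢ' j))^2) ≤ sqrt(2k), i.e., the aggregated vote vectors ∑ᵢ vᵢ and ∑ᵢ vᵢ' are at Euclidean distance at most sqrt(2k). -/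
open Finset

theorem stmt_2 (n p k : ℕ) (hn : 0 < n) (v v' : Fin n → Fin p → ℝ)
    (hv : ∀ i j, v i j = 0 ∨ v i j = 1) (hv' : ∀ i j, v' i j = 0 ∨ v' i j = 1)
    (hsum : ∀ i, ∑ j, v i j = k) (hsum' : ∀ i, ∑ j, v' i j = k)
    (hneighbor : ∃ u : Fin n, ∀ i, i ≠ u → v i = v' i) :
    Real.sqrt (∑ j, ((∑ i, v i j) - (∑ i, v' i j)) ^ 2) ≤ Real.sqrt (2 * k) := by
  obtain ⟨u, hu⟩ := hneighbor
  apply Real.sqrt_le_sqrt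
  have key : ∀ j, ((∑ i, v i j) - (∑ i, v' i j)) = v u j - v' u j := by
    intro j
    rw [← Finset.sum_sub_distrib]
    apply Finset.sum_eq_single u
    · intro i _ hi
      rw [hu i hi, sub_self]
    · intro h
      exact absurd (Finset.mem_univ u) h
  calc ∑ j, ((∑ i, v i j) - (∑ i, v' i j)) ^ 2
      ≤ ∑ j, (v u j + v' u j) := by
        apply Finset.sum_le_sum
        intro j _
        rw [key j]
        rcases hv u j with h | h <;> rcases hv' u j with h' | h' <;> rw [h, h'] <;> norm_num
    _ = 2 * k := by
        rw [Finset.sum_add_distrib, hsum, hsum']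
        ring
end

section
/- Let σ > 0, α > 1 be real numbers and μ, μ' ∈ ℝ. Then ∫_{ℝ} (φ_{μ,σ²}(x))^α · (φ_{μ',σ²}(x))^{1-α} dx = exp(α(α-1)(μ-μ')²/(2σ²)), where φ_{m,σ²}(x) = (1/(σ√(2π))) · exp(-(x-m)²/(2σ²)) is the density of the normal distribution N(m, σ²). -/
open MeasureTheory Real

/-- Density of the normal distribution `N(m, σ²)`. -/
noncomputable def normalPdf (m σ x : ℝ) : ℝ :=
  (1 / (σ * Real.sqrt (2 * Real.pi))) * Real.exp (-(x - m) ^ 2 / (2 * σ ^ 2))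

theorem integral_normalPdf_eq_one (m σ : ℝ) (hσ : 0 < σ) :
    ∫ x : ℝ, normalPdf m σ x = 1 := by
  have hv : Real.toNNReal (σ ^ 2) ≠ 0 := (Real.toNNReal_pos.2 (by positivity)).ne'
  rw [← ProbabilityTheory.integral_gaussianPDFReal_eq_one m hv]
  refine integral_congr_ae (Filter.Eventually.of_forall fun x => ?_)
  beta_reduce
  rw [ProbabilityTheory.gaussianPDFReal_def, normalPdf]
  have : √(2 * π * σ ^ 2) = σ * √(2 * π) := by
    rw [Real.sqrt_mul (by positivity), Real.sqrt_sq hσ.le, mul_comm]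
  simp only [Real.coe_toNNReal _ (sq_nonneg σ), this, one_div]

theorem stmt_3 (σ α : ℝ) (hσ : 0 < σ) (hα : 1 < α) (μ μ' : ℝ) :
    ∫ x : ℝ, (normalPdf μ σ x) ^ α * (normalPdf μ' σ x) ^ (1 - α) =
      Real.exp (α * (α - 1) * (μ - μ') ^ 2 / (2 * σ ^ 2)) := by
  have key : ∀ x : ℝ, (normalPdf μ σ x) ^ α * (normalPdf μ' σ x) ^ (1 - α) =
      Real.exp (α * (α - 1) * (μ - μ') ^ 2 / (2 * σ ^ 2)) *
        normalPdf (α * μ + (1 - α) * μ') σ x := by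
    intro x
    unfold normalPdf
    have hc : 0 < 1 / (σ * Real.sqrt (2 * Real.pi)) := by positivity
    generalize 1 / (σ * Real.sqrt (2 * Real.pi)) = c at hc
    rw [Real.mul_rpow hc.le (Real.exp_pos _).le, Real.mul_rpow hc.le (Real.exp_pos _).le,
      ← Real.exp_mul, ← Real.exp_mul, mul_mul_mul_comm, ← Real.rpow_add hc, ← Real.exp_add,
      mul_left_comm, ← Real.exp_add, add_sub_cancel, Real.rpow_one]
    congr 2
    field_simp
    ring
  simp_rw [key]
  rw [integral_const_mul, integral_normalPdf_eq_one _ _ hσ, mul_one]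
end

section
/- Let σ > 0, α > 1 be real numbers, p, k natural numbers, and μ, μ' : Fin p → ℝ with ∑_{j} (μ j - μ' j)² ≤ 2k. Then (1/(α-1)) · log( ∫_{ℝ^p} ∏_{j} (φ_{μ j, σ²}(x j))^α · (φ_{μ' j, σ²}(x j))^{1-α} dx ) ≤ α·k/σ², where φ_{m,σ²}(x) = (1/(σ√(2π))) · exp(-(x-m)²/(2σ²)) is the density of the normal distribution N(m, σ²). -/
open MeasureTheory Real Finset

lemma normalPdf_mix (σ α m m' x : ℝ) (hσ : 0 < σ) :
    (normalPdf m σ x) ^ α * (normalPdf m' σ x) ^ (1 - α) =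
      Real.exp (α * (α - 1) * (m - m') ^ 2 / (2 * σ ^ 2)) *
        normalPdf (α * m + (1 - α) * m') σ x := by
  unfold normalPdf
  have hc : 0 < 1 / (σ * Real.sqrt (2 * Real.pi)) := by positivity
  rw [Real.mul_rpow hc.le (Real.exp_pos _).le, Real.mul_rpow hc.le (Real.exp_pos _).le,
    ← Real.exp_mul, ← Real.exp_mul, mul_mul_mul_comm, ← Real.rpow_add hc, ← Real.exp_add,
    mul_left_comm, ← Real.exp_add]
  have h1 : α + (1 - α) = 1 := by ring
  rw [h1, Real.rpow_one]
  congr 2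
  field_simp
  ring

lemma normalPdf_integral (σ m : ℝ) (hσ : 0 < σ) : ∫ x, normalPdf m σ x = 1 := by
  obtain ⟨v, hv'⟩ : ∃ v : NNReal, (v : ℝ) = σ ^ 2 := ⟨Real.toNNReal (σ ^ 2),
    Real.coe_toNNReal _ (by positivity)⟩
  have hv : v ≠ 0 := by
    rintro rfl
    have : 0 < σ ^ 2 := by positivity
    simp [← hv'] at this
  rw [← ProbabilityTheory.integral_gaussianPDFReal_eq_one m hv]
  congr 1
  ext x
  simp only [normalPdf, ProbabilityTheory.gaussianPDFReal, hv']
  rw [Real.sqrt_mul (by positivity) (σ ^ 2), Real.sqrt_sq hσ.le, one_div, mul_comm σ]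

theorem stmt_5 (σ α : ℝ) (hσ : 0 < σ) (hα : 1 < α) (p k : ℕ) (μ μ' : Fin p → ℝ)
    (hsens : ∑ j, (μ j - μ' j) ^ 2 ≤ 2 * k) :
    (1 / (α - 1)) *
        Real.log (∫ x : Fin p → ℝ,
          ∏ j, (normalPdf (μ j) σ (x j)) ^ α * (normalPdf (μ' j) σ (x j)) ^ (1 - α)) ≤
      α * k / σ ^ 2 := by
  have hI : (∫ x : Fin p → ℝ,
      ∏ j, (normalPdf (μ j) σ (x j)) ^ α * (normalPdf (μ' j) σ (x j)) ^ (1 - α)) =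
      Real.exp (∑ j, α * (α - 1) * (μ j - μ' j) ^ 2 / (2 * σ ^ 2)) := by
    rw [integral_fintype_prod_volume_eq_prod
      (fun j y => (normalPdf (μ j) σ y) ^ α * (normalPdf (μ' j) σ y) ^ (1 - α)), Real.exp_sum]
    refine Finset.prod_congr rfl fun j _ => ?_
    simp_rw [normalPdf_mix σ α _ _ _ hσ]
    rw [integral_const_mul, normalPdf_integral _ _ hσ, mul_one]
  rw [hI, Real.log_exp, ← Finset.sum_div, ← Finset.mul_sum]
  have h0 : α - 1 ≠ 0 := by linarith
  generalize ∑ j, (μ j - μ' j) ^ 2 = S at *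
  have e : 1 / (α - 1) * (α * (α - 1) * S / (2 * σ ^ 2)) = α * (S / 2) / σ ^ 2 := by
    field_simp
  rw [e]
  gcongr
  linarith
end
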